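/- arXiv:2603.18452 — 2 statements merged into one kernel-verified Lean document; each statement's English description precedes it below -/
import Mathlib

section
/- For every i ∈ {1,…,n}, the expected decay centrality of node V_i under the Pólya joint law is Σ_{z ∈ {0,1}^n} p(z)·C_i(z) = Σ_{j=1, j≠i}^{n} [ρ/4 + (1/4)·(1 − ∏_{s=0}^{n−max(i,j)} (1 − ρ + sδ)/(1 + sδ))] + ρ. -/
open Finset

/-- The Pólya joint law on binary `n`-tuples. -/
noncomputable def polyaP (n : ℕ) (R B Δ : ℝ) (z : Fin n → Fin 2) : ℝ :=
  (∏ i ∈ Finset.range (∑ t, (z t : ℕ)), (R + i * Δ)) *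
    (∏ j ∈ Finset.range (n - ∑ t, (z t : ℕ)), (B + j * Δ)) /
    ∏ m ∈ Finset.range n, (R + B + m * Δ)

/-- Decay centrality (with parameter `1/2`) of node `V_i` in the threshold graph of `z`:
`C_i(z) = Σ_j (1/2)^{d(i,j)}` with `(1/2)^∞ = 0`. Explicitly, the summand for `j ≠ i`
is `1/2` if `z_{max(i,j)} = 1`, `1/4` if `z_{max(i,j)} = 0` and some later node is
universal, and `0` otherwise; the `j = i` summand equals `z_i`. -/
noncomputable def decayCentrality (n : ℕ) (i : Fin n) (z : Fin n → Fin 2) : ℝ :=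
  ∑ j : Fin n,
    if j = i then ((z i : ℕ) : ℝ)
    else if z (max i j) = 1 then 1 / 2
    else if ∃ k : Fin n, max i j < k ∧ z k = 1 then 1 / 4
    else 0

/-!
For `j ≠ i` and `m = max i j`, the `j`-th summand of `C_i` is `1/2`, less `1/4` when `z_m = 0` and
another `1/4` when `z` vanishes from `m` on. So only the probabilities that `z` vanishes on a given
set `S` are needed. Pólya weights satisfy the Pascal-type recursion
`w(a, b + 1) + w(a + 1, b) = w(a, b)`, so summing out the coordinates outside `S` leaves
`w(0, |S|)`, which depends on `S` only through its size.
-/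

theorem fin_two_ne_one_iff {x : Fin 2} : x ≠ 1 ↔ x = 0 := by lia

/-- The Pólya probability of a given word with `a` ones and `b` zeros, with the word length `a + b`
not tied to `n` so that it can vary along a recursion. -/
noncomputable def polyaWeight (R B Δ : ℝ) (a b : ℕ) : ℝ :=
  (∏ i ∈ range a, (R + i * Δ)) * (∏ j ∈ range b, (B + j * Δ)) /
    ∏ m ∈ range (a + b), (R + B + m * Δ)

/-- Binary words indexed by `α` as subsets of `α`: a word corresponds to the set of its ones. -/
def onesEquiv (α : Type*) [Fintype α] [DecidableEq α] : (α → Fin 2) ≃ Finset α where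
  toFun z := {t | z t = 1}
  invFun T t := if t ∈ T then 1 else 0
  left_inv z := by
    funext t
    by_cases h : z t = 1
    · simp [h]
    · simp [fin_two_ne_one_iff.mp h]
  right_inv T := by ext t; simp

/-- The indicator of the event that the word `z` vanishes on `S`. -/
noncomputable def zeroIndicator {α : Type*} (S : Finset α) (z : α → Fin 2) : ℝ :=
  if ∀ k ∈ S, z k = 0 then 1 else 0

theorem sum_powerset_of_pascal {α M : Type*} [DecidableEq α] [AddCommMonoid M] (U : Finset α)
    (f : ℕ → ℕ → M) (hf : ∀ a b, a + b < #U → f a (b + 1) + f (a + 1) b = f a b) :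
    ∑ T ∈ U.powerset, f #T #(U \ T) = f 0 0 := by
  induction U using Finset.induction_on generalizing f with
  | empty => simp
  | insert x U hx ih =>
    rw [card_insert_of_notMem hx] at hf
    have without_x : ∑ T ∈ U.powerset, f #T #(insert x U \ T) = f 0 1 := by
      rw [← ih (fun a b => f a (b + 1)) fun a b h => hf a (b + 1) (by omega)]
      refine sum_congr rfl fun T hT => ?_
      have hxT : x ∉ T := fun h => hx (mem_powerset.mp hT h)
      rw [insert_sdiff_of_notMem U hxT, card_insert_of_notMem (by simp [hx])]
    have with_x : ∑ T ∈ U.powerset, f #(insert x T) #(insert x U \ insert x T) = f 1 0 := by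
      rw [← ih (fun a b => f (a + 1) b) fun a b h => hf (a + 1) b (by omega)]
      refine sum_congr rfl fun T hT => ?_
      have hxT : x ∉ T := fun h => hx (mem_powerset.mp hT h)
      rw [card_insert_of_notMem hxT, insert_sdiff_insert, sdiff_insert_of_notMem hx]
    rw [sum_powerset_insert hx, without_x, with_x, hf 0 0 (by omega)]

section Polya

variable {R B Δ ρ δ : ℝ} {n : ℕ}

theorem polyaWeight_pascal {a b : ℕ} (h : R + B + (a + b : ℕ) * Δ ≠ 0) :
    polyaWeight R B Δ a (b + 1) + polyaWeight R B Δ (a + 1) b = polyaWeight R B Δ a b := by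
  simp only [polyaWeight, ← add_assoc, add_right_comm a 1 b, prod_range_succ, ← add_div]
  rw [← mul_div_mul_right _ (∏ m ∈ range (a + b), (R + B + m * Δ)) h]
  congr 1
  push_cast
  ring

theorem polyaWeight_zero_left (b : ℕ) :
    polyaWeight R B Δ 0 b = ∏ s ∈ range b, (B + s * Δ) / (R + B + s * Δ) := by
  simp [polyaWeight, prod_div_distrib]

theorem polyaP_onesEquiv_symm (T : Finset (Fin n)) :
    polyaP n R B Δ ((onesEquiv (Fin n)).symm T) = polyaWeight R B Δ #T #Tᶜ := by
  have card_ones : ∑ t, ((onesEquiv (Fin n)).symm T t : ℕ) = #T := by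
    simp [onesEquiv, apply_ite]
  have card_zeros : n - #T = #Tᶜ := by rw [card_compl, Fintype.card_fin]
  have length_eq : #T + #Tᶜ = n := by rw [card_add_card_compl, Fintype.card_fin]
  rw [polyaP, polyaWeight, card_ones, card_zeros, length_eq]

theorem zeroIndicator_onesEquiv_symm {α : Type*} [Fintype α] [DecidableEq α] (S T : Finset α) :
    zeroIndicator S ((onesEquiv α).symm T) = if T ∈ Sᶜ.powerset then 1 else 0 := by
  simp [zeroIndicator, onesEquiv, subset_compl_iff_disjoint_left, disjoint_left]

theorem sum_polyaP_mul_zeroIndicator (h : ∀ m < n, R + B + m * Δ ≠ 0) (S : Finset (Fin n)) :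
    ∑ z, polyaP n R B Δ z * zeroIndicator S z =
      ∏ s ∈ range #S, (B + s * Δ) / (R + B + s * Δ) := by
  have card_S : #S + #Sᶜ = n := by rw [card_add_card_compl, Fintype.card_fin]
  have card_compl_eq {T : Finset (Fin n)} (hT : T ∈ Sᶜ.powerset) : #Tᶜ = #S + #(Sᶜ \ T) := by
    have := card_le_card (mem_powerset.mp hT)
    rw [card_sdiff_of_subset (mem_powerset.mp hT), card_compl T, Fintype.card_fin]
    omega
  calc ∑ z, polyaP n R B Δ z * zeroIndicator S z
      = ∑ T ∈ Sᶜ.powerset, polyaWeight R B Δ #T #Tᶜ := by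
        rw [← (onesEquiv (Fin n)).symm.sum_comp]
        simp only [polyaP_onesEquiv_symm, zeroIndicator_onesEquiv_symm, mul_ite, mul_one, mul_zero,
          sum_ite_mem, univ_inter]
    _ = ∑ T ∈ Sᶜ.powerset, polyaWeight R B Δ #T (#S + #(Sᶜ \ T)) :=
        sum_congr rfl fun T hT => by rw [card_compl_eq hT]
    _ = polyaWeight R B Δ 0 #S :=
        sum_powerset_of_pascal Sᶜ (fun a b => polyaWeight R B Δ a (#S + b))
          fun a b hab => polyaWeight_pascal (b := #S + b) (h _ (by omega))
    _ = ∏ s ∈ range #S, (B + s * Δ) / (R + B + s * Δ) := polyaWeight_zero_left #S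

theorem sum_polyaP (h : ∀ m < n, R + B + m * Δ ≠ 0) : ∑ z, polyaP n R B Δ z = 1 := by
  simpa [zeroIndicator] using sum_polyaP_mul_zeroIndicator h ∅

theorem normalized_ratio_eq (hRB : R + B ≠ 0) (hρ : ρ = R / (R + B)) (hδ : δ = Δ / (R + B))
    (s : ℝ) : (1 - ρ + s * δ) / (1 + s * δ) = (B + s * Δ) / (R + B + s * Δ) := by
  have numerator : 1 - ρ + s * δ = (B + s * Δ) / (R + B) := by
    rw [hρ, hδ]
    field_simp
    ring
  have denominator : 1 + s * δ = (R + B + s * Δ) / (R + B) := by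
    rw [hδ]
    field_simp
  rw [numerator, denominator, div_div_div_cancel_right₀ hRB]

end Polya

section Centrality

variable {n : ℕ}

theorem val_eq_one_sub_zeroIndicator {α : Type*} (z : α → Fin 2) (i : α) :
    ((z i : ℕ) : ℝ) = 1 - zeroIndicator {i} z := by
  by_cases h : z i = 1
  · simp [zeroIndicator, h]
  · simp [zeroIndicator, fin_two_ne_one_iff.mp h]

theorem decay_term_eq_zeroIndicator (z : Fin n → Fin 2) (m : Fin n) :
    (if z m = 1 then 1 / 2 else if ∃ k, m < k ∧ z k = 1 then 1 / 4 else 0 : ℝ) =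
      1 / 2 - 1 / 4 * zeroIndicator {m} z - 1 / 4 * zeroIndicator (Ici m) z := by
  have vanishes_at : (∀ k ∈ ({m} : Finset (Fin n)), z k = 0) ↔ z m ≠ 1 := by
    simp only [mem_singleton, forall_eq, fin_two_ne_one_iff]
  have vanishes_from : (∀ k ∈ Ici m, z k = 0) ↔ z m ≠ 1 ∧ ¬∃ k, m < k ∧ z k = 1 := by
    simp only [← Ioi_insert, forall_mem_insert, mem_Ioi, not_exists, not_and, ← ne_eq,
      fin_two_ne_one_iff]
  simp only [zeroIndicator, ↓vanishes_at, ↓vanishes_from]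
  by_cases one_at : z m = 1 <;> by_cases one_later : ∃ k, m < k ∧ z k = 1 <;>
    simp only [one_at, one_later, ne_eq] <;> norm_num

theorem decayCentrality_eq_sum_zeroIndicator (i : Fin n) (z : Fin n → Fin 2) :
    decayCentrality n i z =
      ∑ j with j ≠ i, (1 / 2 - 1 / 4 * zeroIndicator {max i j} z
        - 1 / 4 * zeroIndicator (Ici (max i j)) z) + (1 - zeroIndicator {i} z) := by
  simp only [decayCentrality, decay_term_eq_zeroIndicator, val_eq_one_sub_zeroIndicator]
  rw [sum_ite, filter_eq', if_pos (mem_univ i), sum_singleton, add_comm]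

theorem sum_mul_decayCentrality (p : (Fin n → Fin 2) → ℝ) (i : Fin n) :
    ∑ z, p z * decayCentrality n i z =
      ∑ j with j ≠ i, (1 / 2 * ∑ z, p z - 1 / 4 * ∑ z, p z * zeroIndicator {max i j} z
        - 1 / 4 * ∑ z, p z * zeroIndicator (Ici (max i j)) z)
        + (∑ z, p z - ∑ z, p z * zeroIndicator {i} z) := by
  simp only [decayCentrality_eq_sum_zeroIndicator, mul_add, mul_sum, sum_add_distrib]
  rw [sum_comm]
  simp only [mul_sub, mul_one, mul_comm (p _) (1 / 2), mul_left_comm (p _), sum_sub_distrib]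

end Centrality

/-- Besides reinforcement this covers independent draws (`Δ = 0`) and sampling without replacement
(`Δ < 0`). -/
theorem polyaP_expected_decayCentrality_general {n : ℕ} {R B Δ ρ δ : ℝ}
    (h : ∀ m < n, R + B + m * Δ ≠ 0) (hρ : ρ = R / (R + B)) (hδ : δ = Δ / (R + B)) (i : Fin n) :
    ∑ z : Fin n → Fin 2, polyaP n R B Δ z * decayCentrality n i z =
      (∑ j ∈ Finset.univ.filter (fun j : Fin n => j ≠ i),
        (ρ / 4 + (1 / 4) *
          (1 - ∏ s ∈ Finset.range (n - (max i j : ℕ)), ((1 - ρ + s * δ) / (1 + s * δ))))) +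
        ρ := by
  have hRB : R + B ≠ 0 := by simpa using h 0 i.pos
  have zero_prob (S : Finset (Fin n)) : ∑ z, polyaP n R B Δ z * zeroIndicator S z =
      ∏ s ∈ range #S, (1 - ρ + s * δ) / (1 + s * δ) := by
    simp only [normalized_ratio_eq hRB hρ hδ, sum_polyaP_mul_zeroIndicator h]
  have zero_prob_singleton (m : Fin n) :
      ∑ z, polyaP n R B Δ z * zeroIndicator {m} z = 1 - ρ := by
    simp [zero_prob]
  rw [sum_mul_decayCentrality]
  simp only [sum_polyaP h, zero_prob_singleton, zero_prob (Ici _), Fin.card_Ici, Fin.coe_max]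
  congr 1
  · exact sum_congr rfl fun j _ => by ring
  · ring

/-- The expected decay centrality of node `V_i` under the Pólya joint law. -/
theorem polyaP_expected_decayCentrality (n : ℕ) (hn : 1 ≤ n) (R B Δ : ℝ)
    (hR : 0 < R) (hB : 0 < B) (hΔ : 0 < Δ) (ρ δ : ℝ)
    (hρ : ρ = R / (R + B)) (hδ : δ = Δ / (R + B)) (i : Fin n) :
    ∑ z : Fin n → Fin 2, polyaP n R B Δ z * decayCentrality n i z =
      (∑ j ∈ Finset.univ.filter (fun j : Fin n => j ≠ i),
        (ρ / 4 + (1 / 4) *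
          (1 - ∏ s ∈ Finset.range (n - (max i j : ℕ)), ((1 - ρ + s * δ) / (1 + s * δ))))) +
        ρ := by
  exact polyaP_expected_decayCentrality_general (fun m _ => by positivity) hρ hδ i
end

section
/- Let z ∈ {0,1}^n with z_n = 1, let W be the associated averaging matrix, and define the row vector π* by π*_i = N_i / Σ_{k=1}^{n} N_k. Then the detailed balance condition N_i·W_{ij} = N_j·W_{ji} holds for all i, j ∈ {1,…,n}, and π* is a stationary distribution of W: π*·W = π* and Σ_{i=1}^{n} π*_i = 1. -/
open Finset

/-- `N_i = 1 + Σ_{j ≠ i} z_{max(i,j)}`, the number of neighbors of node `i` plus one. -/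
def Nval (n : ℕ) (z : Fin n → Fin 2) (i : Fin n) : ℝ :=
  1 + ∑ j ∈ Finset.univ.filter (fun j => j ≠ i), ((z (max i j) : ℕ) : ℝ)

/-- The averaging matrix `W_{ij} = (1{i=j} + 1{i≠j}·z_{max(i,j)}) / N_i`. -/
noncomputable def Wmat (n : ℕ) (z : Fin n → Fin 2) : Matrix (Fin n) (Fin n) ℝ :=
  Matrix.of fun i j =>
    ((if i = j then 1 else ((z (max i j) : ℕ) : ℝ)) / Nval n z i)

/-!
Clearing denominators, `N_i W_{ij}` is the `(i, j)` entry of a symmetric matrix `A` whose row sums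
are the `N_i`, so `W` is the random walk on the weighted graph `A`. Symmetry of `A` is detailed
balance, and summing detailed balance over `i` gives stationarity because the rows of `W` sum to
one.
-/

open scoped Matrix

section Reversible

variable {ι R : Type*}

/-- Detailed balance (reversibility) of a transition matrix `P` with respect to the weights `w`;
neither is required to be normalized. -/
def DetailedBalance [Mul R] (w : ι → R) (P : Matrix ι ι R) : Prop :=
  ∀ i j, w i * P i j = w j * P j i

theorem DetailedBalance.div_const [DivisionCommMonoid R] {w : ι → R} {P : Matrix ι ι R}
    (hw : DetailedBalance w P) (c : R) : DetailedBalance (fun i => w i / c) P := fun i j => by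
  rw [div_mul_eq_mul_div, div_mul_eq_mul_div, hw i j]

variable [Fintype ι]

theorem mulVec_one_apply {m : Type*} [NonAssocSemiring R] (A : Matrix m ι R) (i : m) :
    (A *ᵥ 1) i = ∑ j, A i j :=
  dotProduct_one (A i)

theorem DetailedBalance.vecMul_eq_self [NonAssocSemiring R] {w : ι → R} {P : Matrix ι ι R}
    (hw : DetailedBalance w P) (hP : P *ᵥ 1 = 1) : w ᵥ* P = w := by
  funext j
  calc ∑ i, w i * P i j
      = ∑ i, w j * P j i := sum_congr rfl fun i _ => hw i j
    _ = w j * (P *ᵥ 1) j := by rw [mulVec_one_apply, mul_sum]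
    _ = w j := by rw [hP, Pi.one_apply, mul_one]

end Reversible

section RowNormalize

variable {ι K : Type*} [Fintype ι]

/-- The transition matrix of the random walk on the weighted graph with weight matrix `A`: each row
is divided by its sum, which is written `(A *ᵥ 1) i`. A row with zero sum becomes zero. -/
def rowNormalize [DivisionSemiring K] (A : Matrix ι ι K) : Matrix ι ι K :=
  Matrix.of fun i j => A i j / (A *ᵥ 1) i

theorem rowNormalize_mulVec_one [DivisionSemiring K] {A : Matrix ι ι K}
    (hrow : ∀ i, (A *ᵥ 1) i ≠ 0) : rowNormalize A *ᵥ 1 = 1 := by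
  funext i
  calc (rowNormalize A *ᵥ 1) i
      = ∑ j, A i j / (A *ᵥ 1) i := mulVec_one_apply _ i
    _ = (A *ᵥ 1) i / (A *ᵥ 1) i := by rw [← sum_div, ← mulVec_one_apply]
    _ = 1 := div_self (hrow i)

variable [Semifield K] {A : Matrix ι ι K}

theorem mulVec_one_mul_rowNormalize (hrow : ∀ i, (A *ᵥ 1) i ≠ 0) (i j : ι) :
    (A *ᵥ 1) i * rowNormalize A i j = A i j :=
  mul_div_cancel₀ (A i j) (hrow i)

theorem detailedBalance_rowNormalize (hA : A.IsSymm) (hrow : ∀ i, (A *ᵥ 1) i ≠ 0) :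
    DetailedBalance (A *ᵥ 1) (rowNormalize A) := fun i j => by
  rw [mulVec_one_mul_rowNormalize hrow, mulVec_one_mul_rowNormalize hrow, hA.apply]

theorem Wmat_stationary_general (hA : A.IsSymm) (hrow : ∀ i, (A *ᵥ 1) i ≠ 0)
    (htotal : ∑ k, (A *ᵥ 1) k ≠ 0) :
    DetailedBalance (A *ᵥ 1) (rowNormalize A) ∧
      (fun i => (A *ᵥ 1) i / ∑ k, (A *ᵥ 1) k) ᵥ* rowNormalize A =
        (fun i => (A *ᵥ 1) i / ∑ k, (A *ᵥ 1) k) ∧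
      ∑ i, (A *ᵥ 1) i / ∑ k, (A *ᵥ 1) k = 1 := by
  have balance := detailedBalance_rowNormalize hA hrow
  refine ⟨balance, (balance.div_const _).vecMul_eq_self (rowNormalize_mulVec_one hrow), ?_⟩
  rw [← sum_div, div_self htotal]

end RowNormalize

section SelfLoopAdj

variable (n : ℕ) (z : Fin n → Fin 2)

/-- The adjacency matrix, with a loop added at every node, of the graph in which distinct nodes
`i` and `j` are joined when `z_{max(i,j)} = 1`. It is the matrix of numerators of `Wmat n z`. -/
def selfLoopAdj : Matrix (Fin n) (Fin n) ℝ :=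
  Matrix.of fun i j => if i = j then 1 else ((z (max i j) : ℕ) : ℝ)

theorem selfLoopAdj_isSymm : (selfLoopAdj n z).IsSymm := by
  ext i j
  simp only [selfLoopAdj, Matrix.transpose_apply, Matrix.of_apply, max_comm, eq_comm]

theorem selfLoopAdj_mulVec_one : selfLoopAdj n z *ᵥ 1 = Nval n z := by
  funext i
  rw [mulVec_one_apply, Nval, filter_ne', ← add_sum_erase _ _ (mem_univ i)]
  congr 1
  · exact if_pos rfl
  · exact sum_congr rfl fun j hj => if_neg (ne_of_mem_erase hj).symm

theorem rowNormalize_selfLoopAdj : rowNormalize (selfLoopAdj n z) = Wmat n z := by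
  rw [rowNormalize, selfLoopAdj_mulVec_one]
  rfl

theorem Nval_pos (i : Fin n) : 0 < Nval n z i :=
  add_pos_of_pos_of_nonneg one_pos (sum_nonneg fun _ _ => Nat.cast_nonneg _)

end SelfLoopAdj

/-- Detailed balance `N_i W_{ij} = N_j W_{ji}`, and `π*_i = N_i / Σ_k N_k` is a stationary
distribution of `W`: `π* W = π*` and `Σ_i π*_i = 1`. -/
theorem Wmat_stationary (n : ℕ) (hn : 0 < n) (z : Fin n → Fin 2)
    (hz : z ⟨n - 1, Nat.sub_lt hn Nat.one_pos⟩ = 1) :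
    (∀ i j : Fin n, Nval n z i * Wmat n z i j = Nval n z j * Wmat n z j i) ∧
      (∀ j : Fin n,
        ∑ i : Fin n, (Nval n z i / ∑ k : Fin n, Nval n z k) * Wmat n z i j =
          Nval n z j / ∑ k : Fin n, Nval n z k) ∧
      (∑ i : Fin n, Nval n z i / ∑ k : Fin n, Nval n z k = 1) := by
  have : Nonempty (Fin n) := ⟨⟨0, hn⟩⟩
  have hrow (i : Fin n) : Nval n z i ≠ 0 := (Nval_pos n z i).ne'
  have htotal : ∑ k, Nval n z k ≠ 0 := (sum_pos (fun k _ => Nval_pos n z k) univ_nonempty).ne'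
  have general := Wmat_stationary_general (selfLoopAdj_isSymm n z)
  rw [selfLoopAdj_mulVec_one, rowNormalize_selfLoopAdj] at general
  obtain ⟨balance, stationary, normalized⟩ := general hrow htotal
  exact ⟨balance, congrFun stationary, normalized⟩
end
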